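/- arXiv:math/0702124 — 9 statements merged into one kernel-verified Lean document; each statement's English description precedes it below -/
import Mathlib

section
/- Let M be a metric tree and let A be a bounded subset of M. Then α(A) = 2·β(A), where α is the set (Kuratowski) measure of noncompactness and β is the ball (Hausdorff) measure of noncompactness. -/
/-- `S` is a metric segment from `x` to `y` in a metric space: `S` contains `x` and `y`, and
the map `z ↦ dist x z` is an isometry from `S` onto the real interval `[0, dist x y]`. -/
def IsMetricSegment {X : Type*} [MetricSpace X] (S : Set X) (x y : X) : Prop :=
  x ∈ S ∧ y ∈ S ∧
    (∀ z ∈ S, ∀ w ∈ S, |dist x z - dist x w| = dist z w) ∧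
    (fun z => dist x z) '' S = Set.Icc 0 (dist x y)

/-- A metric tree structure on a metric space `M`: every pair of points is joined by a unique
metric segment `seg x y`, and if `[x,z] ∩ [z,y] = {z}` then `[x,z] ∪ [z,y] = [x,y]`. -/
structure MetricTree (M : Type*) [MetricSpace M] where
  seg : M → M → Set M
  seg_isSegment : ∀ x y : M, IsMetricSegment (seg x y) x y
  seg_unique : ∀ x y : M, ∀ S : Set M, IsMetricSegment S x y → S = seg x y
  seg_glue : ∀ x y z : M, seg x z ∩ seg z y = {z} → seg x z ∪ seg z y = seg x y

/-- The set (Kuratowski) measure of noncompactness of `A`: the infimum of all `b > 0` such that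
`A` admits a finite cover by subsets of `A` of diameter at most `b`. -/
noncomputable def setMNC {X : Type*} [MetricSpace X] (A : Set X) : ℝ :=
  sInf {b : ℝ | 0 < b ∧ ∃ (n : ℕ) (E : Fin n → Set X),
    (∀ j, E j ⊆ A) ∧ (∀ j, Metric.diam (E j) ≤ b) ∧ A ⊆ ⋃ j, E j}

/-- The ball (Hausdorff) measure of noncompactness of `A`: the infimum of all `b > 0` such that
`A` admits a finite cover by open balls of radius `b` centered in the ambient space. -/
noncomputable def ballMNC {X : Type*} [MetricSpace X] (A : Set X) : ℝ :=
  sInf {b : ℝ | 0 < b ∧ ∃ (n : ℕ) (c : Fin n → X), A ⊆ ⋃ j, Metric.ball (c j) b}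

/-- The diameter-based ball measure of noncompactness of `A`: the infimum of all `b > 0` such
that `A` admits a finite cover by open balls each of diameter at most `b`. -/
noncomputable def ballDiamMNC {X : Type*} [MetricSpace X] (A : Set X) : ℝ :=
  sInf {b : ℝ | 0 < b ∧ ∃ (n : ℕ) (c : Fin n → X) (r : Fin n → ℝ),
    (∀ j, Metric.diam (Metric.ball (c j) (r j)) ≤ b) ∧ A ⊆ ⋃ j, Metric.ball (c j) (r j)}

/-- `b > 0` is Lifschitz for `X` iff there is `a > 1` such that whenever `dist x y > r > 0`,
some closed ball of radius `r` contains `closedBall x (a*r) ∩ closedBall y (b*r)`. -/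
def IsLifschitz (X : Type*) [MetricSpace X] (b : ℝ) : Prop :=
  0 < b ∧ ∃ a : ℝ, 1 < a ∧ ∀ x y : X, ∀ r : ℝ, 0 < r → r < dist x y →
    ∃ z : X, Metric.closedBall x (a * r) ∩ Metric.closedBall y (b * r) ⊆ Metric.closedBall z r

/-- The Lifschitz characteristic of `X`: the supremum of all `b` Lifschitz for `X`. -/
noncomputable def lifschitzChar (X : Type*) [MetricSpace X] : ℝ :=
  sSup {b : ℝ | IsLifschitz X b}

theorem seg_add {M : Type*} [MetricSpace M] {S : Set M} {x y z : M}
    (h : IsMetricSegment S x y) (hz : z ∈ S) : dist x z + dist z y = dist x y := by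
  obtain ⟨_, hy, hiso, him⟩ := h
  have h1 : dist x z ∈ Set.Icc 0 (dist x y) := him ▸ ⟨z, hz, rfl⟩
  have h2 := hiso z hz y hy
  rw [abs_of_nonpos (by linarith [h1.2])] at h2
  linarith

theorem tree_or {M : Type*} [MetricSpace M] (T : MetricTree M) {x y c : M} (z : M)
    (hc : dist x c + dist c y = dist x y) :
    dist z c + dist c x = dist z x ∨ dist z c + dist c y = dist z y := by
  have key : ∀ w : M, dist z c + dist c w = dist z w ∨
      ∃ p, p ≠ c ∧ p ∈ T.seg z c ∧ p ∈ T.seg c w := by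
    intro w
    by_cases h : T.seg z c ∩ T.seg c w = {c}
    · left
      have h1 := T.seg_glue z w c h
      have h2 : c ∈ T.seg z w := by
        rw [← h1]; exact Or.inl (T.seg_isSegment z c).2.1
      exact seg_add (T.seg_isSegment z w) h2
    · right
      by_contra hne
      push Not at hne
      apply h
      ext p
      constructor
      · rintro ⟨hp1, hp2⟩
        by_contra hpc
        exact hne p hpc hp1 hp2
      · intro hp
        rw [Set.mem_singleton_iff] at hp
        subst hp
        exact ⟨(T.seg_isSegment z p).2.1, (T.seg_isSegment p w).1⟩
  rcases key x with h | ⟨p, hpc, hp1, hp2⟩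
  · exact Or.inl h
  rcases key y with h | ⟨q, hqc, hq1, hq2⟩
  · exact Or.inr h
  exfalso
  have e1 := seg_add (T.seg_isSegment z c) hp1
  have e2 := seg_add (T.seg_isSegment z c) hq1
  have e3 := seg_add (T.seg_isSegment c x) hp2
  have e4 := seg_add (T.seg_isSegment c y) hq2
  have e5 := (T.seg_isSegment z c).2.2.1 p hp1 q hq1
  have t1 := dist_triangle x p y
  have t2 := dist_triangle p q y
  have p1 := dist_pos.2 hpc
  have p2 := dist_pos.2 hqc
  rw [dist_comm x p] at t1
  rw [dist_comm x c] at hc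
  rw [dist_comm c p] at e3
  rw [dist_comm c q] at e4
  rcases abs_cases (dist z p - dist z q) with h | h <;> linarith [h.1]

theorem tree_ball {M : Type*} [MetricSpace M] [Nonempty M] (T : MetricTree M) (E : Set M)
    (hE : Bornology.IsBounded E) {b ε : ℝ} (hb : 0 < b) (hd : Metric.diam E ≤ b) (hε : 0 < ε) :
    ∃ c, E ⊆ Metric.ball c (b / 2 + ε) := by
  rcases E.eq_empty_or_nonempty with rfl | ⟨x0, hx0⟩
  · exact ⟨Classical.arbitrary M, Set.empty_subset _⟩
  by_cases hs : Metric.diam E < ε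
  · refine ⟨x0, fun z hz => ?_⟩
    rw [Metric.mem_ball]
    linarith [Metric.dist_le_diam_of_mem hE hz hx0]
  push Not at hs
  have : ∃ x ∈ E, ∃ y ∈ E, Metric.diam E - ε < dist x y := by
    by_contra! h
    have := Metric.diam_le_of_forall_dist_le (by linarith) h
    linarith
  obtain ⟨x, hx, y, hy, hxy⟩ := this
  have hseg := T.seg_isSegment x y
  have hm : dist x y / 2 ∈ Set.Icc 0 (dist x y) :=
    ⟨by positivity, by linarith [dist_nonneg (x := x) (y := y)]⟩
  rw [← hseg.2.2.2] at hm
  obtain ⟨c, hcS, hc⟩ := hm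
  have hc' : dist x c = dist x y / 2 := hc
  have hadd := seg_add hseg hcS
  refine ⟨c, fun z hz => ?_⟩
  rw [Metric.mem_ball]
  have h1 := Metric.dist_le_diam_of_mem hE hz hx
  have h2 := Metric.dist_le_diam_of_mem hE hz hy
  rcases tree_or T z hadd with h | h
  · rw [dist_comm c x] at h
    linarith
  · linarith

theorem stmt_0 {M : Type*} [MetricSpace M] (T : MetricTree M)
    (A : Set M) (hA : Bornology.IsBounded A) :
    setMNC A = 2 * ballMNC A := by
  unfold setMNC ballMNC
  set S := {b : ℝ | 0 < b ∧ ∃ (n : ℕ) (E : Fin n → Set M),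
    (∀ j, E j ⊆ A) ∧ (∀ j, Metric.diam (E j) ≤ b) ∧ A ⊆ ⋃ j, E j} with hS
  set B := {b : ℝ | 0 < b ∧ ∃ (n : ℕ) (c : Fin n → M), A ⊆ ⋃ j, Metric.ball (c j) b} with hB
  have bS : BddBelow S := ⟨0, fun b hb => hb.1.le⟩
  have bB : BddBelow B := ⟨0, fun b hb => hb.1.le⟩
  have SB : ∀ b ∈ S, ∀ ε > 0, b / 2 + ε ∈ B := by
    rintro b ⟨hb, n, E, hEA, hEd, hcov⟩ ε hε
    refine ⟨by positivity, ?_⟩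
    rcases A.eq_empty_or_nonempty with rfl | ⟨x0, _⟩
    · exact ⟨0, Fin.elim0, Set.empty_subset _⟩
    haveI : Nonempty M := ⟨x0⟩
    choose c hc using fun j => tree_ball T (E j) (hA.subset (hEA j)) hb (hEd j) hε
    exact ⟨n, c, hcov.trans (Set.iUnion_mono hc)⟩
  have BS : ∀ b ∈ B, 2 * b ∈ S := by
    rintro b ⟨hb, n, c, hcov⟩
    refine ⟨by positivity, n, fun j => A ∩ Metric.ball (c j) b, fun j => Set.inter_subset_left,
      fun j => ?_, ?_⟩
    · exact (Metric.diam_mono Set.inter_subset_right Metric.isBounded_ball).trans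
        (Metric.diam_ball hb.le)
    · rw [← Set.inter_iUnion]
      exact Set.subset_inter subset_rfl hcov
  have neS : S.Nonempty := by
    refine ⟨Metric.diam A + 1, by positivity, 1, fun _ => A, fun _ => subset_rfl,
      fun _ => by linarith, fun x hx => Set.mem_iUnion.2 ⟨0, hx⟩⟩
  have neB : B.Nonempty := neS.elim fun b hb => ⟨_, SB b hb 1 one_pos⟩
  apply le_antisymm
  · have : sInf S / 2 ≤ sInf B := le_csInf neB fun b hb => by
      linarith [csInf_le bS (BS b hb)]
    linarith
  · refine le_csInf neS fun b hb => ?_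
    refine le_of_forall_pos_le_add fun ε hε => ?_
    linarith [csInf_le bB (SB b hb (ε / 2) (by positivity))]
end

section
/- Let M be a metric tree containing at least two distinct points. Then the Lifschitz characteristic of M equals 2, i.e., κ(M) = 2. -/
theorem MetricTree.add_aux {M : Type*} [MetricSpace M] (T : MetricTree M) {x y z : M}
    (hz : z ∈ T.seg x y) : dist x z + dist z y = dist x y := by
  obtain ⟨hx, hy, hi, him⟩ := T.seg_isSegment x y
  have h1 : dist x z ∈ Set.Icc 0 (dist x y) := him ▸ ⟨z, hz, rfl⟩
  have h2 := hi z hz y hy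
  rw [abs_of_nonpos (by linarith [h1.2])] at h2
  linarith

theorem MetricTree.exists_aux {M : Type*} [MetricSpace M] (T : MetricTree M) (x y : M) {t : ℝ}
    (h0 : 0 ≤ t) (h1 : t ≤ dist x y) : ∃ z ∈ T.seg x y, dist x z = t := by
  obtain ⟨hx, hy, hi, him⟩ := T.seg_isSegment x y
  have : t ∈ Set.Icc 0 (dist x y) := ⟨h0, h1⟩
  rw [← him] at this
  exact this

theorem MetricTree.glue_aux {M : Type*} [MetricSpace M] (T : MetricTree M) (x p z : M) :
    dist x z + dist z p = dist x p ∨ ∃ w, w ∈ T.seg x z ∧ w ∈ T.seg z p ∧ w ≠ z := by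
  by_cases h : T.seg x z ∩ T.seg z p = {z}
  · left
    apply T.add_aux
    rw [← T.seg_glue x p z h]
    exact Or.inl (T.seg_isSegment x z).2.1
  · right
    by_contra hc
    push Not at hc
    apply h
    ext w
    constructor
    · rintro ⟨h1, h2⟩
      exact hc w h1 h2
    · rintro rfl
      exact ⟨(T.seg_isSegment x w).2.1, (T.seg_isSegment w p).1⟩

theorem MetricTree.four_aux {M : Type*} [MetricSpace M] (T : MetricTree M) (x y p z : M)
    (hz : z ∈ T.seg x y) :
    dist x z + dist z p = dist x p ∨ dist y z + dist z p = dist y p := by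
  rcases T.glue_aux x p z with h | ⟨w, hw1, hw2, hw⟩
  · exact Or.inl h
  rcases T.glue_aux y p z with h | ⟨v, hv1, hv2, hv⟩
  · exact Or.inr h
  exfalso
  have e1 := T.add_aux hw1
  have e2 := T.add_aux hv1
  have e3 := T.add_aux hz
  have e4 := (T.seg_isSegment z p).2.2.1 w hw2 v hv2
  have p1 := dist_pos.2 hw
  have p2 := dist_pos.2 hv
  have t1 := dist_triangle x w y
  have t2 := dist_triangle w v y
  rw [dist_comm z w, dist_comm z v] at e4
  rw [dist_comm v y] at t2
  rw [dist_comm z y] at e3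
  rcases abs_cases (dist w z - dist v z) with h | h <;> linarith

theorem stmt_1 {M : Type*} [MetricSpace M] (T : MetricTree M)
    (h : ∃ x y : M, x ≠ y) :
    lifschitzChar M = 2 := by
  have key : ∀ b : ℝ, 1 < b → b < 2 → IsLifschitz M b := by
    intro b hb1 hb2
    refine ⟨by linarith, 3 - b, by linarith, ?_⟩
    intro x y r hr hxy
    obtain ⟨z, hz, hzt⟩ := T.exists_aux x y (t := (2 - b) * r) (by nlinarith) (by nlinarith)
    refine ⟨z, ?_⟩
    rintro p ⟨hp1, hp2⟩
    rw [Metric.mem_closedBall] at *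
    have e := T.add_aux hz
    rw [dist_comm z y] at e
    rw [dist_comm p] at *
    rcases T.four_aux x y p z hz with h | h
    · linarith
    · linarith
  have ub : ∀ b : ℝ, IsLifschitz M b → b ≤ 2 := by
    rintro b ⟨hb, a, ha, H⟩
    by_contra hb2
    push Not at hb2
    obtain ⟨u, y, huy⟩ := h
    have hL := dist_pos.2 huy
    obtain ⟨x, hx, hxt⟩ := T.exists_aux u y (t := dist u y / 2) (by linarith) (by linarith)
    have e := T.add_aux hx
    obtain ⟨c, hc1, hc⟩ := exists_between (lt_min ha (show 1 < b / 2 by linarith))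
    have hca := lt_of_lt_of_le hc (min_le_left _ _)
    have hcb := lt_of_lt_of_le hc (min_le_right _ _)
    obtain ⟨r, hr⟩ : ∃ r, dist u y / 2 = c * r :=
      ⟨dist u y / 2 / c, by field_simp⟩
    have hr0 : 0 < r := by
      by_contra hn
      nlinarith
    obtain ⟨z, hz⟩ := H x y r hr0 (by nlinarith)
    have h1 := hz (show u ∈ _ from ⟨by
      rw [Metric.mem_closedBall]; nlinarith, by rw [Metric.mem_closedBall]; nlinarith⟩)
    have h2 := hz (show y ∈ _ from ⟨by
      rw [Metric.mem_closedBall, dist_comm]; nlinarith, by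
      rw [Metric.mem_closedBall, dist_self]; positivity⟩)
    rw [Metric.mem_closedBall] at h1 h2
    have := dist_triangle_right u y z
    nlinarith
  apply le_antisymm
  · exact csSup_le ⟨3/2, key _ (by norm_num) (by norm_num)⟩ ub
  · apply le_of_forall_lt_imp_le_of_dense
    intro b hb
    have hm : max b (3/2) < 2 := max_lt hb (by norm_num)
    exact (le_max_left b (3/2)).trans
      (le_csSup ⟨2, ub⟩ (key _ (lt_of_lt_of_le (by norm_num) (le_max_right _ _)) hm))
end

section
/- Let E be a subset of a metric tree M with diam(E) = 2r. Then for every ε > 0 there exists a point m ∈ M such that E ⊆ B(m; r + ε), where B(m; s) denotes the open ball of radius s centered at m. -/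
theorem MetricTree.btw {M : Type*} [MetricSpace M] (T : MetricTree M) {x y w : M}
    (h : w ∈ T.seg x y) : dist x w + dist w y = dist x y := by
  obtain ⟨_, h2, h3, h4⟩ := T.seg_isSegment x y
  have h5 : dist x w ∈ Set.Icc 0 (dist x y) := h4 ▸ ⟨w, h, rfl⟩
  have h6 := h3 w h y h2
  rw [abs_of_nonpos (by linarith [h5.2])] at h6
  linarith

theorem MetricTree.glue_btw {M : Type*} [MetricSpace M] (T : MetricTree M) (z m y : M) :
    dist z m + dist m y = dist z y ∨ ∃ a ∈ T.seg z m, a ∈ T.seg m y ∧ a ≠ m := by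
  by_cases h : T.seg z m ∩ T.seg m y = {m}
  · left
    apply T.btw
    rw [← T.seg_glue z y m h]
    exact Or.inl (T.seg_isSegment z m).2.1
  · right
    by_contra! hc
    apply h
    ext a
    constructor
    · rintro ⟨h1, h2⟩
      exact hc a h1 h2
    · rintro rfl
      exact ⟨(T.seg_isSegment z _).2.1, (T.seg_isSegment _ y).1⟩

theorem MetricTree.key {M : Type*} [MetricSpace M] (T : MetricTree M) {x y m : M} (z : M)
    (h : dist x m + dist m y = dist x y) :
    dist z m + dist m y = dist z y ∨ dist z m + dist m x = dist z x := by
  rcases T.glue_btw z m y with h1 | ⟨a, ha, ha', ham⟩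
  · exact Or.inl h1
  rcases T.glue_btw z m x with h1 | ⟨b, hb, hb', hbm⟩
  · exact Or.inr h1
  exfalso
  have e1 := T.btw ha
  have e2 := T.btw ha'
  have e3 := T.btw hb
  have e4 := T.btw hb'
  have e5 := (T.seg_isSegment z m).2.2.1 a ha b hb
  have p1 := dist_pos.2 ham
  have p2 := dist_pos.2 hbm
  have t1 := dist_triangle x b y
  have t2 := dist_triangle b a y
  rw [dist_comm m a] at e2
  rw [dist_comm m b, dist_comm b x, dist_comm m x] at e4
  rw [dist_comm b a] at t2
  rcases abs_cases (dist z a - dist z b) with h6 | h6 <;> linarith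

theorem stmt_2 {M : Type*} [MetricSpace M] [Nonempty M] (T : MetricTree M)
    (E : Set M) (r : ℝ) (hE : Bornology.IsBounded E) (hdiam : Metric.diam E = 2 * r) :
    ∀ ε : ℝ, 0 < ε → ∃ m : M, E ⊆ Metric.ball m (r + ε) := by
  intro ε hε
  rcases E.eq_empty_or_nonempty with rfl | ⟨x₀, hx₀⟩
  · exact ⟨Classical.arbitrary M, Set.empty_subset _⟩
  obtain ⟨x, hx, y, hy, hxy⟩ : ∃ x ∈ E, ∃ y ∈ E, 2 * r - ε < dist x y := by
    by_contra! hc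
    have h0 : 0 ≤ 2 * r - ε := by simpa using hc x₀ hx₀ x₀ hx₀
    have := Metric.diam_le_of_forall_dist_le h0 hc
    linarith
  obtain ⟨m, hm, hmd⟩ : dist x y / 2 ∈ (fun z => dist x z) '' T.seg x y := by
    rw [(T.seg_isSegment x y).2.2.2]
    constructor <;> linarith [dist_nonneg (x := x) (y := y)]
  have hmd : dist x m = dist x y / 2 := hmd
  have hb := T.btw hm
  refine ⟨m, fun z hz => ?_⟩
  have h1 := Metric.dist_le_diam_of_mem hE hz hx
  have h2 := Metric.dist_le_diam_of_mem hE hz hy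
  rw [Metric.mem_ball]
  rw [dist_comm x m] at hmd
  rw [dist_comm x m] at hb
  rcases T.key z (T.btw hm) with h | h <;> linarith
end

section
/- Let A be a bounded subset of a metric tree M. Then β*(A) = 2·β(A), where β* is the diameter-based ball measure of noncompactness and β is the ball (Hausdorff) measure of noncompactness. -/
theorem seg_dist {M : Type*} [MetricSpace M] {S : Set M} {x y p : M}
    (h : IsMetricSegment S x y) (hp : p ∈ S) : dist x p + dist p y = dist x y := by
  obtain ⟨hx, hy, hi, him⟩ := h
  have h1 : dist x p ∈ Set.Icc 0 (dist x y) := him ▸ Set.mem_image_of_mem _ hp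
  have h2 := hi p hp y hy
  rw [abs_of_nonpos (by linarith [h1.2])] at h2
  linarith

theorem subseg_right {M : Type*} [MetricSpace M] {S : Set M} {x y p : M}
    (h : IsMetricSegment S x y) (hp : p ∈ S) :
    IsMetricSegment {w ∈ S | dist x p ≤ dist x w} p y := by
  have hd := fun q hq => seg_dist (p := q) h hq
  obtain ⟨hx, hy, hi, him⟩ := h
  have key : ∀ w ∈ S, dist x p ≤ dist x w → dist p w = dist x w - dist x p := by
    intro w hw hle
    rw [← hi p hp w hw, abs_of_nonpos (by linarith)]; ring
  have hpy := hd p hp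
  refine ⟨⟨hp, le_rfl⟩, ⟨hy, by linarith [dist_nonneg (x := p) (y := y)]⟩, ?_, ?_⟩
  · rintro z ⟨hz, hz'⟩ w ⟨hw, hw'⟩
    rw [key z hz hz', key w hw hw', ← hi z hz w hw]
    congr 1; ring
  · ext t
    constructor
    · rintro ⟨w, ⟨hw, hw'⟩, rfl⟩
      refine ⟨dist_nonneg, ?_⟩
      have := hd w hw
      have := key w hw hw'
      have := dist_nonneg (x := w) (y := y)
      show dist p w ≤ _
      linarith
    · rintro ⟨ht0, ht1⟩
      have : dist x p + t ∈ Set.Icc 0 (dist x y) :=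
        ⟨by positivity, by linarith⟩
      rw [← him] at this
      obtain ⟨w, hw, hwe⟩ := this
      have hwe : dist x w = dist x p + t := hwe
      refine ⟨w, ⟨hw, by linarith⟩, ?_⟩
      show dist p w = t
      rw [key w hw (by linarith)]; linarith

theorem subseg_left {M : Type*} [MetricSpace M] {S : Set M} {x y p : M}
    (h : IsMetricSegment S x y) (hp : p ∈ S) :
    IsMetricSegment {w ∈ S | dist x w ≤ dist x p} p x := by
  have hd := fun q hq => seg_dist (p := q) h hq
  obtain ⟨hx, hy, hi, him⟩ := h
  have key : ∀ w ∈ S, dist x w ≤ dist x p → dist p w = dist x p - dist x w := by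
    intro w hw hle
    rw [← hi p hp w hw, abs_of_nonneg (by linarith)]
  have hpy := hd p hp
  refine ⟨⟨hp, le_rfl⟩, ⟨hx, by simp⟩, ?_, ?_⟩
  · rintro z ⟨hz, hz'⟩ w ⟨hw, hw'⟩
    rw [key z hz hz', key w hw hw', ← hi z hz w hw, abs_sub_comm]
    congr 1; ring
  · ext t
    constructor
    · rintro ⟨w, ⟨hw, hw'⟩, rfl⟩
      refine ⟨dist_nonneg, ?_⟩
      have := key w hw hw'
      have := dist_nonneg (x := x) (y := w)
      show dist p w ≤ _
      rw [dist_comm p x]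
      linarith
    · rintro ⟨ht0, ht1⟩
      rw [dist_comm p x] at ht1
      have : dist x p - t ∈ Set.Icc 0 (dist x y) :=
        ⟨by linarith, by linarith [dist_nonneg (x := p) (y := y)]⟩
      rw [← him] at this
      obtain ⟨w, hw, hwe⟩ := this
      have hwe : dist x w = dist x p - t := hwe
      refine ⟨w, ⟨hw, by linarith⟩, ?_⟩
      show dist p w = t
      rw [key w hw (by linarith)]; linarith

theorem seg_compact {M : Type*} [MetricSpace M] {S : Set M} {x y : M}
    (h : IsMetricSegment S x y) : IsCompact S := by
  obtain ⟨hx, hy, hi, him⟩ := h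
  have hiso : Isometry (fun z : S => dist x z.1) := by
    refine Isometry.of_dist_eq fun a b => ?_
    rw [Real.dist_eq, hi a.1 a.2 b.1 b.2]; rfl
  rw [isCompact_iff_isCompact_univ, hiso.isEmbedding.isInducing.isCompact_iff]
  have : (fun z : S => dist x z.1) '' Set.univ = Set.Icc 0 (dist x y) := by
    rw [← him]; ext t; simp
  rw [this]; exact isCompact_Icc

theorem tree_mid {M : Type*} [MetricSpace M] (T : MetricTree M) (u v : M) :
    ∃ m : M, ∀ z : M, dist z m + dist u v / 2 ≤ max (dist z u) (dist z v) := by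
  have hS := T.seg_isSegment u v
  have hmid : dist u v / 2 ∈ Set.Icc 0 (dist u v) :=
    ⟨by positivity, by linarith [dist_nonneg (x := u) (y := v)]⟩
  rw [← hS.2.2.2] at hmid
  obtain ⟨m, hm, hme⟩ := hmid
  have hme : dist u m = dist u v / 2 := hme
  refine ⟨m, fun z => ?_⟩
  obtain ⟨p, hp, hmin⟩ := (seg_compact hS).exists_isMinOn ⟨u, hS.1⟩
    (f := fun w => dist z w) (by fun_prop)
  have hmin : ∀ w ∈ T.seg u v, dist z p ≤ dist z w := fun w hw => hmin hw
  have glue : ∀ q, T.seg p q ⊆ T.seg u v → dist z p + dist p q = dist z q := by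
    intro q hq
    have hg := T.seg_glue z q p (by
      ext w
      constructor
      · rintro ⟨h1, h2⟩
        have := hmin w (hq h2)
        have := seg_dist (T.seg_isSegment z p) h1
        exact dist_le_zero.1 (by linarith)
      · rintro rfl
        exact ⟨(T.seg_isSegment z w).2.1, (T.seg_isSegment w q).1⟩)
    exact seg_dist (T.seg_isSegment z q)
      (hg ▸ Or.inl (T.seg_isSegment z p).2.1)
  have hv := glue v (by rw [← T.seg_unique _ _ _ (subseg_right hS hp)]; exact fun w hw => hw.1)
  have hu := glue u (by rw [← T.seg_unique _ _ _ (subseg_left hS hp)]; exact fun w hw => hw.1)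
  have hpd := seg_dist hS hp
  have hpm := hS.2.2.1 p hp m hm
  have htri := dist_triangle z p m
  rw [dist_comm p u] at hu
  rcases le_total (dist u p) (dist u m) with hc | hc
  · rw [abs_of_nonpos (by linarith)] at hpm
    exact le_max_of_le_right (by linarith)
  · rw [abs_of_nonneg (by linarith)] at hpm
    exact le_max_of_le_left (by linarith)

theorem tree_cover {M : Type*} [MetricSpace M] (T : MetricTree M) (c : M) (E : Set M)
    (hE : Bornology.IsBounded E) {b ε : ℝ} (hε : 0 < ε) (hb : Metric.diam E ≤ b) :
    ∃ m : M, E ⊆ Metric.ball m (b / 2 + ε) := by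
  rcases E.eq_empty_or_nonempty with rfl | ⟨x, hx⟩
  · exact ⟨c, Set.empty_subset _⟩
  have : ∃ u ∈ E, ∃ v ∈ E, Metric.diam E - ε < dist u v := by
    by_contra! hcon
    have h0 := hcon x hx x hx
    rw [dist_self] at h0
    have := Metric.diam_le_of_forall_dist_le h0 hcon
    linarith
  obtain ⟨u, hu, v, hv, huv⟩ := this
  obtain ⟨m, hm⟩ := tree_mid T u v
  refine ⟨m, fun z hz => ?_⟩
  have h1 := Metric.dist_le_diam_of_mem hE hz hu
  have h2 := Metric.dist_le_diam_of_mem hE hz hv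
  have h3 := (hm z).trans (max_le h1 h2)
  rw [Metric.mem_ball]
  linarith

theorem stmt_3 {M : Type*} [MetricSpace M] (T : MetricTree M)
    (A : Set M) (hA : Bornology.IsBounded A) :
    ballDiamMNC A = 2 * ballMNC A := by
  have bdd1 : BddBelow {b : ℝ | 0 < b ∧ ∃ (n : ℕ) (c : Fin n → M) (r : Fin n → ℝ),
      (∀ j, Metric.diam (Metric.ball (c j) (r j)) ≤ b) ∧ A ⊆ ⋃ j, Metric.ball (c j) (r j)} :=
    ⟨0, fun b hb => hb.1.le⟩
  have bdd2 : BddBelow {b : ℝ | 0 < b ∧ ∃ (n : ℕ) (c : Fin n → M),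
      A ⊆ ⋃ j, Metric.ball (c j) b} :=
    ⟨0, fun b hb => hb.1.le⟩
  have ne2 : {b : ℝ | 0 < b ∧ ∃ (n : ℕ) (c : Fin n → M),
      A ⊆ ⋃ j, Metric.ball (c j) b}.Nonempty := by
    rcases A.eq_empty_or_nonempty with rfl | ⟨x, hx⟩
    · exact ⟨1, one_pos, 0, Fin.elim0, Set.empty_subset _⟩
    · obtain ⟨r, hr0, hr⟩ := hA.subset_ball_lt 0 x
      exact ⟨r, hr0, 1, fun _ => x, fun a ha => Set.mem_iUnion.2 ⟨0, hr ha⟩⟩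
  have step : ∀ b ∈ {b : ℝ | 0 < b ∧ ∃ (n : ℕ) (c : Fin n → M),
      A ⊆ ⋃ j, Metric.ball (c j) b},
      2 * b ∈ {b : ℝ | 0 < b ∧ ∃ (n : ℕ) (c : Fin n → M) (r : Fin n → ℝ),
      (∀ j, Metric.diam (Metric.ball (c j) (r j)) ≤ b) ∧ A ⊆ ⋃ j, Metric.ball (c j) (r j)} := by
    rintro b ⟨hb, n, c, hc⟩
    exact ⟨by positivity, n, c, fun _ => b, fun j => Metric.diam_ball hb.le, hc⟩
  apply le_antisymm
  · have : ballDiamMNC A / 2 ≤ ballMNC A := by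
      refine le_csInf ne2 fun b hb => ?_
      have : ballDiamMNC A ≤ 2 * b := csInf_le bdd1 (step b hb)
      linarith
    linarith
  · obtain ⟨b₀, hb₀⟩ := ne2
    refine le_csInf ⟨_, step b₀ hb₀⟩ ?_
    rintro b ⟨hb, n, c, r, hd, hcov⟩
    have : ballMNC A ≤ b / 2 := by
      refine le_of_forall_pos_le_add fun ε hε => ?_
      choose m hm using fun j => tree_cover T (c j) _ Metric.isBounded_ball hε (hd j)
      exact csInf_le bdd2 ⟨by positivity, n, m, hcov.trans (Set.iUnion_mono hm)⟩
    linarith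
end

section
/- Let M be a metric space, let A ⊆ M be bounded, and let b > 0 be Lifschitz for M. Then b·β(A) ≤ α(A); consequently κ(M)·β(A) ≤ α(A) whenever the Lifschitz characteristic κ(M) is finite. -/
theorem ballMNC_nonneg' {M : Type*} [MetricSpace M] (A : Set M) : 0 ≤ ballMNC A :=
  Real.sInf_nonneg (fun _ hx => hx.1.le)

theorem setMNC_nonneg' {M : Type*} [MetricSpace M] (A : Set M) : 0 ≤ setMNC A :=
  Real.sInf_nonneg (fun _ hx => hx.1.le)

theorem lif_aux {M : Type*} [MetricSpace M] (A : Set M) (hA : Bornology.IsBounded A)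
    (b : ℝ) (hb : IsLifschitz M b) : b * ballMNC A ≤ setMNC A := by
  obtain ⟨hb0, a, ha, hL⟩ := hb
  by_contra! hlt
  have hα := setMNC_nonneg' A
  have hβ : 0 < ballMNC A := by
    by_contra! h
    nlinarith
  obtain ⟨d, ⟨hd0, n, E, hEA, hEd, hAE⟩, hd⟩ := exists_lt_of_csInf_lt (by
    refine ⟨Metric.diam A + 1, ?_, 1, fun _ => A, fun _ => subset_rfl, fun _ => by linarith, ?_⟩
    · have := Metric.diam_nonneg (s := A)
      linarith
    · intro x hx
      simpa using hx) hlt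
  have h1 : max (d / b) (ballMNC A / a) < ballMNC A := by
    apply max_lt
    · rw [div_lt_iff₀ hb0]; linarith
    · rw [div_lt_iff₀ (by linarith)]; nlinarith
  obtain ⟨r, hr1, hr2⟩ := exists_between h1
  have hr3 := (le_max_left _ _).trans_lt hr1
  have hr4 := (le_max_right _ _).trans_lt hr1
  have hr0 : 0 < r := (div_pos hd0 hb0).trans hr3
  rw [div_lt_iff₀ hb0] at hr3
  rw [div_lt_iff₀ (by linarith)] at hr4
  have hne : {b : ℝ | 0 < b ∧ ∃ (n : ℕ) (c : Fin n → M), A ⊆ ⋃ j, Metric.ball (c j) b}.Nonempty := by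
    by_contra h
    rw [Set.not_nonempty_iff_eq_empty] at h
    unfold ballMNC at hβ
    rw [h, Real.sInf_empty] at hβ
    exact lt_irrefl _ hβ
  obtain ⟨s, ⟨hs0, m, c, hc⟩, hs⟩ := exists_lt_of_csInf_lt hne hr4
  have key : ∀ j i, ∃ z : M, E j ∩ Metric.ball (c i) s ⊆ Metric.closedBall z r := by
    intro j i
    by_cases h : ∃ y ∈ E j, r < dist (c i) y
    · obtain ⟨y, hy, hry⟩ := h
      obtain ⟨z, hz⟩ := hL (c i) y r hr0 hry
      refine ⟨z, fun x hx => hz ⟨?_, ?_⟩⟩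
      · have := Metric.mem_ball.1 hx.2
        rw [Metric.mem_closedBall]
        linarith
      · have := Metric.dist_le_diam_of_mem (hA.subset (hEA j)) hx.1 hy
        have := hEd j
        rw [Metric.mem_closedBall]
        linarith
    · push Not at h
      refine ⟨c i, fun x hx => ?_⟩
      rw [Metric.mem_closedBall, dist_comm]
      exact h x hx.1
  choose z hz using key
  obtain ⟨t, ht1, ht2⟩ := exists_between hr2
  apply absurd ht2
  rw [not_lt]
  refine csInf_le ⟨0, fun _ hx => hx.1.le⟩ ⟨hr0.trans ht1, n * m,
    fun k => z (finProdFinEquiv.symm k).1 (finProdFinEquiv.symm k).2, ?_⟩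
  intro x hx
  obtain ⟨j, hj⟩ := Set.mem_iUnion.1 (hAE hx)
  obtain ⟨i, hi⟩ := Set.mem_iUnion.1 (hc hx)
  refine Set.mem_iUnion.2 ⟨finProdFinEquiv (j, i), ?_⟩
  beta_reduce
  rw [Equiv.symm_apply_apply]
  exact Metric.closedBall_subset_ball ht1 (hz j i ⟨hj, hi⟩)

theorem stmt_8 {M : Type*} [MetricSpace M] (A : Set M) (hA : Bornology.IsBounded A)
    (b : ℝ) (hb : IsLifschitz M b) :
    b * ballMNC A ≤ setMNC A ∧
    (BddAbove {c : ℝ | IsLifschitz M c} → lifschitzChar M * ballMNC A ≤ setMNC A) := by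
  refine ⟨lif_aux A hA b hb, fun _ => ?_⟩
  rcases (ballMNC_nonneg' A).eq_or_lt with h | h
  · rw [← h, mul_zero]
    exact setMNC_nonneg' A
  · rw [← le_div_iff₀ h]
    refine csSup_le ⟨b, hb⟩ fun c hc => ?_
    rw [le_div_iff₀ h]
    exact lif_aux A hA c hc
end

section
/- Let M be a metric space and let A ⊆ M be a bounded subset with diam(A) = D. Then for every b > 0 that is Lifschitz for M there exists z ∈ M such that A ⊆ B_c(z; D/b), where B_c(z; s) denotes the closed ball of radius s centered at z. -/
theorem stmt_9 {M : Type*} [MetricSpace M] [Nonempty M] (A : Set M)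
    (hA : Bornology.IsBounded A) (D : ℝ) (hD : Metric.diam A = D)
    (b : ℝ) (hb : IsLifschitz M b) :
    ∃ z : M, A ⊆ Metric.closedBall z (D / b) := by
  obtain ⟨hb0, a, ha, H⟩ := hb
  subst hD
  rcases A.eq_empty_or_nonempty with rfl | ⟨p, hp⟩
  · exact ⟨Classical.arbitrary M, Set.empty_subset _⟩
  have hd : ∀ x ∈ A, ∀ y ∈ A, dist x y ≤ Metric.diam A :=
    fun x hx y hy => Metric.dist_le_diam_of_mem hA hx hy
  rcases (Metric.diam_nonneg (s := A)).eq_or_lt with h0 | h0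
  · refine ⟨p, fun x hx => ?_⟩
    rw [Metric.mem_closedBall, ← h0, zero_div, h0]
    exact hd x hx p hp
  have hr : 0 < Metric.diam A / b := div_pos h0 hb0
  have step : ∀ s, Metric.diam A / b ≤ s → (∃ x, A ⊆ Metric.closedBall x (a * s)) →
      ∃ z, A ⊆ Metric.closedBall z s := by
    rintro s hs ⟨x, hx⟩
    by_cases hxs : A ⊆ Metric.closedBall x s
    · exact ⟨x, hxs⟩
    obtain ⟨y, hy, hys⟩ := Set.not_subset.1 hxs
    rw [Metric.mem_closedBall, not_le, dist_comm] at hys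
    obtain ⟨z, hz⟩ := H x y s (hr.trans_le hs) hys
    refine ⟨z, fun w hw => hz ⟨hx hw, ?_⟩⟩
    rw [div_le_iff₀ hb0] at hs
    rw [Metric.mem_closedBall]
    linarith [hd w hw y hy]
  have key : ∀ n : ℕ, (∃ x, A ⊆ Metric.closedBall x (a ^ n * (Metric.diam A / b))) →
      ∃ z, A ⊆ Metric.closedBall z (Metric.diam A / b) := by
    intro n
    induction n with
    | zero => simp
    | succ n ih =>
      intro h
      refine ih (step _ ?_ ?_)
      · exact le_mul_of_one_le_left hr.le (one_le_pow₀ ha.le)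
      · rwa [← mul_assoc, ← pow_succ']
  obtain ⟨n, hn⟩ := pow_unbounded_of_one_lt b ha
  refine key n ⟨p, fun x hx => ?_⟩
  rw [Metric.mem_closedBall]
  calc dist x p ≤ Metric.diam A := hd x hx p hp
    _ = b * (Metric.diam A / b) := by field_simp
    _ ≤ _ := mul_le_mul_of_nonneg_right hn.le hr.le
end

section
/- Let M be a metric tree and x, y, z ∈ M. Then there exists w ∈ M such that [x,z] ∩ [y,z] = [w,z] and [x,y] ∩ [w,z] = {w}. -/
theorem IsMetricSegment.btw {X : Type*} [MetricSpace X] {S : Set X} {x y p : X}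
    (h : IsMetricSegment S x y) (hp : p ∈ S) : dist x p + dist p y = dist x y := by
  obtain ⟨_, hy, hi, him⟩ := h
  have h1 : dist x p ∈ Set.Icc 0 (dist x y) := him ▸ Set.mem_image_of_mem _ hp
  have h2 := hi p hp y hy
  rw [abs_of_nonpos (by linarith [h1.2])] at h2
  linarith

theorem MetricTree.mem_iff {M : Type*} [MetricSpace M] (T : MetricTree M) (x y p : M) :
    p ∈ T.seg x y ↔ dist x p + dist p y = dist x y := by
  constructor
  · exact fun h => (T.seg_isSegment x y).btw h
  intro h
  obtain ⟨hx1, hp1, hi1, him1⟩ := T.seg_isSegment x p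
  obtain ⟨hp2, hy2, hi2, him2⟩ := T.seg_isSegment p y
  have key : ∀ b ∈ T.seg p y, dist x b = dist x p + dist p b := by
    intro b hb
    have h1 := (T.seg_isSegment p y).btw hb
    have h2 := dist_triangle x b y
    have h3 := dist_triangle x p b
    linarith
  have key2 : ∀ a ∈ T.seg x p, ∀ b ∈ T.seg p y, dist x b - dist x a = dist a b := by
    intro a ha b hb
    have h1 := (T.seg_isSegment x p).btw ha
    have h2 := key b hb
    have h3 := dist_triangle a p b
    have h4 := dist_triangle x a b
    linarith
  have hS : IsMetricSegment (T.seg x p ∪ T.seg p y) x y := by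
    refine ⟨Or.inl hx1, Or.inr hy2, ?_, ?_⟩
    · rintro a (ha | ha) b (hb | hb)
      · exact hi1 a ha b hb
      · rw [abs_sub_comm, key2 a ha b hb, abs_of_nonneg dist_nonneg]
      · rw [key2 b hb a ha, abs_of_nonneg dist_nonneg, dist_comm]
      · rw [key a ha, key b hb, ← hi2 a ha b hb]
        congr 1
        ring
    · ext t
      constructor
      · rintro ⟨a, ha | ha, rfl⟩
        · have := (T.seg_isSegment x p).btw ha
          refine ⟨dist_nonneg, ?_⟩
          have h1 := dist_nonneg (x := a) (y := p)
          have h2 := dist_nonneg (x := p) (y := y)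
          show dist x a ≤ _
          linarith
        · have := (T.seg_isSegment p y).btw ha
          refine ⟨dist_nonneg, ?_⟩
          have h1 := dist_nonneg (x := a) (y := y)
          have h2 := key a ha
          show dist x a ≤ _
          linarith
      · rintro ⟨h0, h1⟩
        rcases le_total t (dist x p) with h2 | h2
        · have : t ∈ (fun z => dist x z) '' T.seg x p := him1 ▸ ⟨h0, h2⟩
          obtain ⟨a, ha, rfl⟩ := this
          exact ⟨a, Or.inl ha, rfl⟩
        · have : t - dist x p ∈ (fun z => dist p z) '' T.seg p y := by
            rw [him2]; constructor <;> linarith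
          obtain ⟨a, ha, hat⟩ := this
          refine ⟨a, Or.inr ha, ?_⟩
          have h2 := key a ha
          simp only at hat ⊢
          linarith
  rw [← T.seg_unique x y _ hS]
  exact Or.inl hp1

theorem MetricTree.branch {M : Type*} [MetricSpace M] (T : MetricTree M) (x y z : M) :
    ∃ w ∈ T.seg z x ∩ T.seg z y, ∀ a ∈ T.seg z x ∩ T.seg z y, dist z a ≤ dist z w := by
  obtain ⟨hx1, hp1, hi1, him1⟩ := T.seg_isSegment z x
  obtain ⟨hx2, hp2, hi2, him2⟩ := T.seg_isSegment z y
  set A := T.seg z x ∩ T.seg z y with hA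
  set D := (fun a => dist z a) '' A with hD
  have hne : D.Nonempty := ⟨_, z, ⟨hx1, hx2⟩, rfl⟩
  have hu1 : ∀ d ∈ D, d ≤ dist z x := by
    rintro _ ⟨a, ha, rfl⟩
    have := (T.seg_isSegment z x).btw ha.1
    have h1 := dist_nonneg (x := a) (y := x)
    show dist z a ≤ _
    linarith
  have hu2 : ∀ d ∈ D, d ≤ dist z y := by
    rintro _ ⟨a, ha, rfl⟩
    have := (T.seg_isSegment z y).btw ha.2
    have h1 := dist_nonneg (x := a) (y := y)
    show dist z a ≤ _
    linarith
  have hb : BddAbove D := ⟨_, hu1⟩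
  have h0 : 0 ≤ sSup D := le_csSup hb ⟨z, ⟨hx1, hx2⟩, dist_self z⟩
  have e1 : sSup D ∈ (fun a => dist z a) '' T.seg z x := him1 ▸ ⟨h0, csSup_le hne hu1⟩
  have e2 : sSup D ∈ (fun a => dist z a) '' T.seg z y := him2 ▸ ⟨h0, csSup_le hne hu2⟩
  obtain ⟨w, hw, hwt⟩ := e1
  obtain ⟨v, hv, hvt⟩ := e2
  simp only at hwt hvt
  have hle : ∀ a ∈ A, dist z a ≤ sSup D := fun a ha => le_csSup hb ⟨a, ha, rfl⟩
  have hwv : w = v := by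
    by_contra hne'
    have hpos := dist_pos.2 hne'
    obtain ⟨_, ⟨a, ha, rfl⟩, hlt⟩ :=
      exists_lt_of_lt_csSup hne (show sSup D - dist w v / 2 < sSup D by linarith)
    simp only at hlt
    have h1 := hi1 w hw a ha.1
    have h2 := hi2 v hv a ha.2
    have h3 := hle a ha
    rw [abs_of_nonneg (by linarith)] at h1 h2
    have h4 := dist_triangle_right w v a
    linarith
  subst hwv
  exact ⟨w, ⟨hw, hv⟩, fun a ha => hwt ▸ hle a ha⟩

theorem stmt_11 {M : Type*} [MetricSpace M] (T : MetricTree M) (x y z : M) :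
    ∃ w : M, T.seg x z ∩ T.seg y z = T.seg w z ∧ T.seg x y ∩ T.seg w z = {w} := by
  obtain ⟨w, ⟨hwx, hwy⟩, hmax⟩ := T.branch x y z
  have hi := (T.seg_isSegment z x).2.2.1
  have bx := (T.mem_iff _ _ _).1 hwx
  have bf := (T.mem_iff _ _ _).1 hwy
  have hwxy : w ∈ T.seg x y := by
    rw [← T.seg_glue x y w]
    · exact Or.inr (T.seg_isSegment w y).1
    ext p
    simp only [Set.mem_inter_iff, Set.mem_singleton_iff]
    constructor
    · rintro ⟨h1, h2⟩
      rw [T.mem_iff] at h1 h2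
      have t1 := dist_triangle z w p
      have t2 := dist_triangle z p x
      have t3 := dist_triangle z p y
      rw [dist_comm x p, dist_comm p w, dist_comm x w] at h1
      have := hmax p ⟨(T.mem_iff _ _ _).2 (by linarith), (T.mem_iff _ _ _).2 (by linarith)⟩
      exact (dist_le_zero.1 (by linarith : dist w p ≤ 0)).symm
    · rintro rfl
      exact ⟨(T.seg_isSegment x p).2.1, (T.seg_isSegment p y).1⟩
  have bxy := (T.mem_iff _ _ _).1 hwxy
  refine ⟨w, ?_, ?_⟩
  · ext p
    simp only [Set.mem_inter_iff, T.mem_iff]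
    rw [dist_comm p z, dist_comm x p, dist_comm x z, dist_comm y p, dist_comm y z, dist_comm w z]
    constructor
    · rintro ⟨h1, h2⟩
      have m1 := (T.mem_iff z x p).2 (by linarith)
      have m2 := (T.mem_iff z y p).2 (by linarith)
      have h3 := hmax p ⟨m1, m2⟩
      have h4 := hi w hwx p m1
      rw [abs_of_nonneg (by linarith)] at h4
      linarith
    · intro h
      have t1 := dist_triangle p w x
      have t2 := dist_triangle p w y
      have t3 := dist_triangle z p x
      have t4 := dist_triangle z p y
      rw [dist_comm p w] at t1 t2
      constructor <;> linarith
  · ext p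
    simp only [Set.mem_inter_iff, Set.mem_singleton_iff]
    constructor
    · rintro ⟨h1, h2⟩
      rw [T.mem_iff] at h1 h2
      have t3 := dist_triangle z p x
      have t4 := dist_triangle z p y
      rw [dist_comm p z, dist_comm w z] at h2
      rw [dist_comm x p] at h1
      rw [dist_comm x w] at bxy
      exact (dist_le_zero.1 (by linarith : dist w p ≤ 0)).symm
    · rintro rfl
      exact ⟨hwxy, (T.seg_isSegment p z).1⟩
end

section
/- A metric tree M is compact if and only if both of the following hold: (1) M = ⋃_{f ∈ F} [a, f] for every a ∈ M, and (2) the closure of F is compact, where F is the set of final points (leaves) of M. -/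
theorem mt_mem {M : Type*} [MetricSpace M] (T : MetricTree M) (x y z : M) :
    z ∈ T.seg x y ↔ dist x z + dist z y = dist x y := by
  have fwd : ∀ x y z : M, z ∈ T.seg x y → dist x z + dist z y = dist x y := by
    intro x y z hz
    obtain ⟨hx, hy, hi, him⟩ := T.seg_isSegment x y
    have h1 := hi z hz y hy
    have h2 : dist x z ∈ Set.Icc 0 (dist x y) := him ▸ ⟨z, hz, rfl⟩
    rw [abs_of_nonpos (by linarith [h2.2])] at h1
    linarith
  refine ⟨fwd x y z, fun h => ?_⟩
  have hI : T.seg x z ∩ T.seg z y = {z} := by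
    ext t
    constructor
    · rintro ⟨h1, h2⟩
      have e1 := fwd _ _ _ h1
      have e2 := fwd _ _ _ h2
      have e3 := dist_triangle x t y
      rw [dist_comm z t] at e2
      have : dist t z ≤ 0 := by linarith
      exact dist_le_zero.1 this
    · rintro rfl
      exact ⟨(T.seg_isSegment x _).2.1, (T.seg_isSegment _ y).1⟩
  rw [← T.seg_glue x y z hI]
  exact Or.inl (T.seg_isSegment x z).2.1

theorem mt_compact {M : Type*} [MetricSpace M] (T : MetricTree M) (x y : M) :
    IsCompact (T.seg x y) := by
  obtain ⟨hx, hy, hi, him⟩ := T.seg_isSegment x y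
  have hc : ∀ t : Set.Icc 0 (dist x y), ∃ z ∈ T.seg x y, dist x z = t := by
    intro t
    exact him.symm.subset t.2
  choose g hg hgt using hc
  have hiso : Isometry g := by
    refine Isometry.of_dist_eq fun s t => ?_
    rw [← hi _ (hg s) _ (hg t), hgt, hgt]
    rfl
  have hr : T.seg x y = Set.range g := by
    apply Set.Subset.antisymm
    · intro z hz
      have h2 : dist x z ∈ Set.Icc 0 (dist x y) := him ▸ ⟨z, hz, rfl⟩
      refine ⟨⟨_, h2⟩, ?_⟩
      rw [← dist_eq_zero, ← hi _ (hg _) _ hz, hgt]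
      simp
    · rintro _ ⟨t, rfl⟩
      exact hg t
  rw [hr]
  exact isCompact_range hiso.continuous

theorem mt_sub {M : Type*} [MetricSpace M] (T : MetricTree M) {y v w z : M}
    (h1 : w ∈ T.seg y v) (h2 : z ∈ T.seg y w) : z ∈ T.seg y v := by
  rw [mt_mem] at *
  have := dist_triangle y z v
  have := dist_triangle z w v
  linarith

theorem mt_ne {M : Type*} [MetricSpace M] (T : MetricTree M) {a u y : M}
    (h : y ∉ T.seg a u) : ∃ z, z ≠ y ∧ z ∈ T.seg y a ∧ z ∈ T.seg y u := by
  by_contra! hc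
  apply h
  have hI : T.seg a y ∩ T.seg y u = {y} := by
    ext t
    constructor
    · rintro ⟨h1, h2⟩
      by_contra ht
      refine hc t ht ?_ h2
      rw [mt_mem] at *
      rw [dist_comm y t, dist_comm t a, dist_comm y a]
      linarith
    · rintro rfl
      exact ⟨(T.seg_isSegment a _).2.1, (T.seg_isSegment _ u).1⟩
  rw [← T.seg_glue a u y hI]
  exact Or.inl (T.seg_isSegment a y).2.1

theorem mt_tripod {M : Type*} [MetricSpace M] (T : MetricTree M) {u v y : M} (a : M)
    (h : y ∈ T.seg u v) : y ∈ T.seg a u ∨ y ∈ T.seg a v := by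
  by_contra! hc
  obtain ⟨z, hz, hza, hzu⟩ := mt_ne T hc.1
  obtain ⟨w, hw, hwa, hwv⟩ := mt_ne T hc.2
  have key : ∀ t, t ≠ y → t ∈ T.seg y u → t ∈ T.seg y v → False := by
    intro t ht h1 h2
    rw [mt_mem] at *
    have := dist_triangle u t v
    have : 0 < dist y t := dist_pos.2 ht.symm
    rw [dist_comm u t] at *
    rw [dist_comm u y] at *
    linarith
  have hi := (T.seg_isSegment y a).2.2.1 z hza w hwa
  rcases le_total (dist y z) (dist y w) with hl | hl
  · refine key z hz hzu (mt_sub T hwv ?_)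
    rw [abs_of_nonpos (by linarith)] at hi
    rw [mt_mem]; linarith
  · refine key w hw (mt_sub T hzu ?_) hwv
    rw [abs_of_nonneg (by linarith)] at hi
    rw [mt_mem, dist_comm w z]; linarith

theorem stmt_17 {M : Type*} [MetricSpace M] (T : MetricTree M) :
    IsCompact (Set.univ : Set M) ↔
      ((∀ a : M, (Set.univ : Set M) =
          ⋃ f ∈ {f : M | ∀ x y : M, f ∉ T.seg x y \ {x, y}}, T.seg a f) ∧
        IsCompact (closure {f : M | ∀ x y : M, f ∉ T.seg x y \ {x, y}})) := by
  constructor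
  · intro hM
    refine ⟨fun a => ?_, hM.of_isClosed_subset isClosed_closure (Set.subset_univ _)⟩
    symm
    rw [Set.eq_univ_iff_forall]
    intro x
    have hcl : IsClosed {y : M | dist a x + dist x y = dist a y} :=
      isClosed_eq (by fun_prop) (by fun_prop)
    have hK := hM.of_isClosed_subset hcl (Set.subset_univ _)
    obtain ⟨y, hy, hmax⟩ := hK.exists_isMaxOn ⟨x, by simp⟩
      (f := fun y => dist a y) (by fun_prop)
    have hy' : dist a x + dist x y = dist a y := hy
    have key : ∀ u, y ∈ T.seg a u → y = u := by
      intro u hu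
      rw [mt_mem] at hu
      have h1 := dist_triangle a x u
      have h2 := dist_triangle x y u
      have h3 : dist a u ≤ dist a y := hmax (show dist a x + dist x u = dist a u by linarith)
      exact dist_le_zero.1 (by linarith)
    simp only [Set.mem_iUnion]
    refine ⟨y, ?_, (mt_mem T _ _ _).2 hy'⟩
    rintro u v ⟨h1, h2⟩
    apply h2
    rcases mt_tripod T a h1 with h | h
    · exact Or.inl (key u h)
    · exact Or.inr (key v h)
  · rintro ⟨h1, h2⟩
    rcases isEmpty_or_nonempty M with he | ⟨⟨a⟩⟩
    · exact Set.Finite.isCompact (Set.toFinite _)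
    have hz : ∀ z : M, ∃ f ∈ {f : M | ∀ x y : M, f ∉ T.seg x y \ {x, y}}, z ∈ T.seg a f := by
      intro z
      have : z ∈ (Set.univ : Set M) := Set.mem_univ z
      rw [h1 a] at this
      simpa only [Set.mem_iUnion, exists_prop] using this
    choose φ hφ hzφ using hz
    rw [isCompact_iff_ultrafilter_le_nhds]
    intro U _
    obtain ⟨f, -, hf⟩ := isCompact_iff_ultrafilter_le_nhds.1 h2 (U.map φ) (by
      rw [Filter.le_principal_iff]
      exact Filter.mem_map.2 (Filter.univ_mem' fun z => subset_closure (hφ z)))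
    have hall : ∀ z, z ∈ T.seg a f ∨ dist z f ≤ dist (φ z) f := by
      intro z
      rcases mt_tripod T f (hzφ z) with h | h
      · left
        rw [mt_mem] at *
        rw [dist_comm a z, dist_comm z f, dist_comm a f]; linarith
      · right
        rw [mt_mem] at h
        rw [dist_comm z f, dist_comm (φ z) f]
        linarith [dist_nonneg (x := z) (y := φ z)]
    have hor : ∀ᶠ z in (U : Filter M), z ∈ T.seg a f ∨ dist z f ≤ dist (φ z) f :=
      Filter.Eventually.of_forall hall
    rcases Ultrafilter.eventually_or.1 hor with h | h
    · obtain ⟨x, -, hx⟩ := isCompact_iff_ultrafilter_le_nhds.1 (mt_compact T a f) U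
        (Filter.le_principal_iff.2 h)
      exact ⟨x, Set.mem_univ _, hx⟩
    · refine ⟨f, Set.mem_univ _, ?_⟩
      have ht : Filter.Tendsto φ U (nhds f) := hf
      have ht2 := tendsto_iff_dist_tendsto_zero.1 ht
      have : Filter.Tendsto (id : M → M) U (nhds f) :=
        tendsto_iff_dist_tendsto_zero.2
          (squeeze_zero' (Filter.Eventually.of_forall fun _ => dist_nonneg) h ht2)
      exact this
end

section
/- Let (X,d) be a metric space, let a, p, b ∈ X, let S₁ be a metric segment from a to p and S₂ a metric segment from p to b. Then S₁ ∪ S₂ is a metric segment from a to b if and only if p is between a and b, i.e., d(a,b) = d(a,p) + d(p,b). -/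
theorem stmt_19 {X : Type*} [MetricSpace X] (a p b : X) (S₁ S₂ : Set X)
    (h1 : IsMetricSegment S₁ a p) (h2 : IsMetricSegment S₂ p b) :
    IsMetricSegment (S₁ ∪ S₂) a b ↔ dist a b = dist a p + dist p b := by 
  obtain ⟨ha, hp, i1, m1⟩ := h1
  obtain ⟨hp2, hb, i2, m2⟩ := h2
  constructor
  · rintro ⟨_, _, i, m⟩
    have e := i p (Or.inl hp) b (Or.inr hb)
    have hm : dist a p ∈ Set.Icc 0 (dist a b) := m ▸ ⟨p, Or.inl hp, rfl⟩
    rw [abs_of_nonpos (by linarith [hm.2])] at e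
    linarith
  · intro h
    have k1 : ∀ z ∈ S₁, dist a z + dist z p = dist a p := by
      intro z hz
      have e := i1 z hz p hp
      have hm : dist a z ∈ Set.Icc 0 (dist a p) := m1 ▸ ⟨z, hz, rfl⟩
      rw [abs_of_nonpos (by linarith [hm.2])] at e
      linarith
    have k2 : ∀ z ∈ S₂, dist p z + dist z b = dist p b := by
      intro z hz
      have e := i2 z hz b hb
      have hm : dist p z ∈ Set.Icc 0 (dist p b) := m2 ▸ ⟨z, hz, rfl⟩
      rw [abs_of_nonpos (by linarith [hm.2])] at e
      linarith
    have k3 : ∀ z ∈ S₁, ∀ w ∈ S₂, dist z w = dist z p + dist p w := by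
      intro z hz w hw
      linarith [k1 z hz, k2 w hw, dist_triangle a z b, dist_triangle z w b,
        dist_triangle z p w]
    have k4 : ∀ z ∈ S₁, ∀ w ∈ S₂, |dist a z - dist a w| = dist z w := by
      intro z hz w hw
      have e1 := k3 a ha w hw
      have e2 := k3 z hz w hw
      have e3 := k1 z hz
      have e4 : 0 ≤ dist z w := dist_nonneg
      rw [abs_of_nonpos (by linarith)]
      linarith
    refine ⟨Or.inl ha, Or.inr hb, ?_, ?_⟩
    · rintro z (hz | hz) w (hw | hw)
      · exact i1 z hz w hw
      · exact k4 z hz w hw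
      · rw [abs_sub_comm, dist_comm z w]
        exact k4 w hw z hz
      · rw [k3 a ha z hz, k3 a ha w hw, ← i2 z hz w hw]
        congr 1
        ring
    · ext t
      constructor
      · rintro ⟨z, hz | hz, rfl⟩
        · have e := k1 z hz
          exact ⟨dist_nonneg, by
            have := @dist_nonneg _ _ z p
            have := @dist_nonneg _ _ p b
            show dist a z ≤ dist a b
            linarith⟩
        · exact ⟨dist_nonneg, by
            have := k2 z hz
            have := @dist_nonneg _ _ z b
            show dist a z ≤ dist a b
            linarith [k3 a ha z hz]⟩
      · rintro ⟨t0, t1⟩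
        rcases le_total t (dist a p) with ht | ht
        · have hm : t ∈ (fun z => dist a z) '' S₁ := m1 ▸ ⟨t0, ht⟩
          obtain ⟨z, hz, e⟩ := hm
          exact ⟨z, Or.inl hz, e⟩
        · have hm : t - dist a p ∈ (fun z => dist p z) '' S₂ :=
            m2 ▸ ⟨by linarith, by linarith⟩
          obtain ⟨z, hz, e⟩ := hm
          refine ⟨z, Or.inr hz, ?_⟩
          have e' : dist p z = t - dist a p := e
          show dist a z = t
          linarith [k3 a ha z hz]
end
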